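/- For 0 < q < 1, functions f, g : \mathbb{R} \to \mathbb{R}, and n a nonnegative integer, the q-Leibniz rule holds: D_q^n (f \cdot g)(x) = \sum_{k=0}^{n} \binom{n}{k}_q (D_q^{n-k} f)(q^k x) (D_q^k g)(x). -/

import Mathlib

/-- The q-Pochhammer symbol `(a; q)_n`. -/
noncomputable def qPoch (a q : ℝ) (n : ℕ) : ℝ :=
  ∏ j ∈ Finset.range n, (1 - a * q ^ j)

/-- The Gaussian binomial coefficient. -/
noncomputable def qBinom (q : ℝ) (n k : ℕ) : ℝ :=
  qPoch q q n / (qPoch q q (n - k) * qPoch q q k)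

/-- The q-derivative. -/
noncomputable def Dq (q : ℝ) (f : ℝ → ℝ) : ℝ → ℝ :=
  fun x => (f (q * x) - f x) / ((q - 1) * x)

/-!
Let `A` be the `q`-derivative in the first variable of a function `F u v`, and `B` the
`q`-derivative in the second variable followed by the dilation `u ↦ q * u` of the first.
Telescoping through `F (q * u) u`, the `q`-derivative of the diagonal `u ↦ F u u` is the diagonal
of `(A + B) F`. Dilation and `q`-derivative commute up to a factor `q`, so `A * B = q • (B * A)`,
and the noncommutative `q`-binomial theorem expands `(A + B) ^ n`. The Leibniz rule is this
expansion applied to `F u v = f u * g v`.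
-/

section GaussianBinomial

theorem qPoch_zero (a q : ℝ) : qPoch a q 0 = 1 :=
  Finset.prod_range_zero _

theorem qPoch_succ (a q : ℝ) (n : ℕ) : qPoch a q (n + 1) = qPoch a q n * (1 - a * q ^ n) :=
  Finset.prod_range_succ _ n

variable {q : ℝ}

theorem one_sub_mul_pow_ne_zero (hq : |q| ≠ 1) (n : ℕ) : 1 - q * q ^ n ≠ 0 := by
  intro h
  have hpow : |q| ^ (n + 1) = 1 := by
    rw [← abs_pow, pow_succ', ← sub_eq_zero.mp h, abs_one]
  exact hq ((pow_eq_one_iff_of_nonneg (abs_nonneg q) n.succ_ne_zero).mp hpow)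

theorem qPoch_self_ne_zero (hq : |q| ≠ 1) (n : ℕ) : qPoch q q n ≠ 0 :=
  Finset.prod_ne_zero_iff.mpr fun j _ => one_sub_mul_pow_ne_zero hq j

theorem qBinom_zero_right (hq : |q| ≠ 1) (n : ℕ) : qBinom q n 0 = 1 := by
  rw [qBinom, Nat.sub_zero, qPoch_zero, mul_one, div_self (qPoch_self_ne_zero hq n)]

theorem qBinom_self (hq : |q| ≠ 1) (n : ℕ) : qBinom q n n = 1 := by
  rw [qBinom, Nat.sub_self, qPoch_zero, one_mul, div_self (qPoch_self_ne_zero hq n)]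

-- Beware that truncated subtraction gives `qBinom q n (n + 1)` a nonzero value.
theorem qBinom_succ_succ (hq : |q| ≠ 1) {n k : ℕ} (hk : k < n) :
    qBinom q (n + 1) (k + 1) = qBinom q n k + q ^ (k + 1) * qBinom q n (k + 1) := by
  obtain ⟨m, rfl⟩ := Nat.exists_eq_add_of_lt hk
  have hsub : k + m + 1 - k = m + 1 := by omega
  have hsub' : k + m + 1 - (k + 1) = m := by omega
  have hPm := qPoch_self_ne_zero hq m
  have hPk := qPoch_self_ne_zero hq k
  have hqm := one_sub_mul_pow_ne_zero hq m
  have hqk := one_sub_mul_pow_ne_zero hq k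
  simp only [qBinom, Nat.add_sub_add_right, hsub, hsub', qPoch_succ _ _ (k + m + 1),
    qPoch_succ _ _ m, qPoch_succ _ _ k]
  field_simp
  ring

theorem sum_qBinom_succ_smul {M : Type*} [AddCommMonoid M] [Module ℝ M] (hq : |q| ≠ 1) (n : ℕ)
    (c : ℕ → M) :
    ∑ k ∈ Finset.range (n + 2), qBinom q (n + 1) k • c k =
      ∑ k ∈ Finset.range (n + 1), (q ^ k * qBinom q n k) • c k +
        ∑ k ∈ Finset.range (n + 1), qBinom q n k • c (k + 1) := by
  have interior : ∑ k ∈ Finset.range n, qBinom q (n + 1) (k + 1) • c (k + 1) =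
      ∑ k ∈ Finset.range n, qBinom q n k • c (k + 1) +
        ∑ k ∈ Finset.range n, (q ^ (k + 1) * qBinom q n (k + 1)) • c (k + 1) := by
    rw [← Finset.sum_add_distrib]
    refine Finset.sum_congr rfl fun k hk => ?_
    rw [qBinom_succ_succ hq (Finset.mem_range.mp hk), add_smul]
  rw [Finset.sum_range_succ, Finset.sum_range_succ', interior,
    Finset.sum_range_succ' (fun k => (q ^ k * qBinom q n k) • c k),
    Finset.sum_range_succ (fun k => qBinom q n k • c (k + 1))]
  simp only [qBinom_zero_right hq, qBinom_self hq, pow_zero, one_mul, one_smul]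
  abel

end GaussianBinomial

section QCommuting

variable {R : Type*} [Semiring R]

theorem mul_pow_of_mul_eq_smul_mul {S : Type*} [CommSemiring S] [Algebra S R] {q : S} {a b : R}
    (h : a * b = q • (b * a)) (k : ℕ) : a * b ^ k = q ^ k • (b ^ k * a) := by
  induction k with
  | zero => simp
  | succ k ih =>
    calc a * b ^ (k + 1) = a * b ^ k * b := by rw [pow_succ, mul_assoc]
      _ = q ^ k • (b ^ k * (a * b)) := by rw [ih, smul_mul_assoc, mul_assoc]
      _ = q ^ (k + 1) • (b ^ (k + 1) * a) := by
        rw [h, mul_smul_comm, smul_smul, ← mul_assoc, ← pow_succ, ← pow_succ]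

theorem add_pow_of_mul_eq_smul_mul [Algebra ℝ R] {q : ℝ} (hq : |q| ≠ 1) {a b : R}
    (h : a * b = q • (b * a)) (n : ℕ) :
    (a + b) ^ n = ∑ k ∈ Finset.range (n + 1), qBinom q n k • (b ^ k * a ^ (n - k)) := by
  induction n with
  | zero => simp [qBinom_self hq]
  | succ n ih =>
    have mul_left_a {k : ℕ} (hk : k ≤ n) :
        a * (b ^ k * a ^ (n - k)) = q ^ k • (b ^ k * a ^ (n + 1 - k)) := by
      rw [← mul_assoc, mul_pow_of_mul_eq_smul_mul h, smul_mul_assoc, mul_assoc, ← pow_succ',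
        Nat.sub_add_comm hk]
    have mul_left_b (k : ℕ) :
        b * (b ^ k * a ^ (n - k)) = b ^ (k + 1) * a ^ (n + 1 - (k + 1)) := by
      rw [← mul_assoc, ← pow_succ', Nat.add_sub_add_right]
    rw [pow_succ', ih, add_mul, Finset.mul_sum, Finset.mul_sum, sum_qBinom_succ_smul hq]
    congr 1 <;> refine Finset.sum_congr rfl fun k hk => ?_
    · rw [mul_smul_comm, mul_left_a (Finset.mem_range_succ_iff.mp hk), smul_smul,
        mul_comm (q ^ k)]
    · rw [mul_smul_comm, mul_left_b]

end QCommuting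

section TwoVariables

/-- The `q`-derivative in the first variable. Two-variable functions are taken on `ℝˣ` to
avoid the junk value of the `q`-derivative at `0`. -/
noncomputable def DqFst (q : ℝˣ) : Module.End ℝ (ℝˣ → ℝˣ → ℝ) where
  toFun F u v := (F (q * u) v - F u v) / ((q - 1) * u)
  map_add' F G := by ext u v; simp only [Pi.add_apply]; ring
  map_smul' c F := by ext u v; simp only [Pi.smul_apply, smul_eq_mul, RingHom.id_apply]; ring

/-- The `q`-derivative in the second variable followed by the dilation `u ↦ q * u` of the first:
the part of the `q`-derivative of `u ↦ F u u` that `DqFst` does not account for. -/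
noncomputable def dilateDqSnd (q : ℝˣ) : Module.End ℝ (ℝˣ → ℝˣ → ℝ) where
  toFun F u v := (F (q * u) (q * v) - F (q * u) v) / ((q - 1) * v)
  map_add' F G := by ext u v; simp only [Pi.add_apply]; ring
  map_smul' c F := by ext u v; simp only [Pi.smul_apply, smul_eq_mul, RingHom.id_apply]; ring

/-- The tensor product `f ⊗ g` of two functions, as a function of two nonzero variables. -/
def outerMul (f g : ℝ → ℝ) : ℝˣ → ℝˣ → ℝ :=
  fun u v => f u * g v

variable (q : ℝˣ)

theorem DqFst_mul_dilateDqSnd :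
    DqFst q * dilateDqSnd q = (q : ℝ) • (dilateDqSnd q * DqFst q) := by
  ext F u v
  simp only [DqFst, dilateDqSnd, Module.End.mul_apply, LinearMap.smul_apply, LinearMap.coe_mk,
    AddHom.coe_mk, Pi.smul_apply, smul_eq_mul, Units.val_mul]
  field_simp
  ring

theorem DqFst_outerMul (f g : ℝ → ℝ) :
    DqFst q (outerMul f g) = outerMul (Dq q f) g := by
  ext u v
  simp only [DqFst, outerMul, Dq, LinearMap.coe_mk, AddHom.coe_mk, Units.val_mul]
  ring

theorem DqFst_pow_outerMul (f g : ℝ → ℝ) (n : ℕ) :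
    (DqFst q ^ n) (outerMul f g) = outerMul ((Dq q)^[n] f) g := by
  induction n with
  | zero => rfl
  | succ n ih =>
    rw [pow_succ', Module.End.mul_apply, ih, DqFst_outerMul, Function.iterate_succ_apply']

theorem dilateDqSnd_outerMul (f g : ℝ → ℝ) :
    dilateDqSnd q (outerMul f g) = outerMul (fun x => f (q * x)) (Dq q g) := by
  ext u v
  simp only [dilateDqSnd, outerMul, Dq, LinearMap.coe_mk, AddHom.coe_mk, Units.val_mul]
  ring

theorem dilateDqSnd_pow_outerMul (f g : ℝ → ℝ) (n : ℕ) :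
    (dilateDqSnd q ^ n) (outerMul f g) = outerMul (fun x => f (q ^ n * x)) ((Dq q)^[n] g) := by
  induction n with
  | zero => simp
  | succ n ih =>
    rw [pow_succ', Module.End.mul_apply, ih, dilateDqSnd_outerMul, Function.iterate_succ_apply']
    simp only [pow_succ, mul_assoc]

variable {q}

theorem Dq_diagonal {h : ℝ → ℝ} {F : ℝˣ → ℝˣ → ℝ} (hF : ∀ u : ℝˣ, h u = F u u) (u : ℝˣ) :
    Dq q h u = (DqFst q + dilateDqSnd q) F u u := by
  have hqu : h (q * u) = F (q * u) (q * u) := hF (q * u)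
  simp only [Dq, hqu, hF, DqFst, dilateDqSnd, LinearMap.add_apply, LinearMap.coe_mk,
    AddHom.coe_mk, Pi.add_apply]
  ring

theorem Dq_iterate_diagonal {h : ℝ → ℝ} {F : ℝˣ → ℝˣ → ℝ} (hF : ∀ u : ℝˣ, h u = F u u) (n : ℕ)
    (u : ℝˣ) : (Dq q)^[n] h u = ((DqFst q + dilateDqSnd q) ^ n) F u u := by
  induction n generalizing u with
  | zero => exact hF u
  | succ n ih => rw [Function.iterate_succ_apply', pow_succ', Module.End.mul_apply, Dq_diagonal ih]

end TwoVariables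

theorem q_leibniz_rule_general {q : ℝ} (hq0 : q ≠ 0) (hq1 : |q| ≠ 1) (f g : ℝ → ℝ) {x : ℝ}
    (hx : x ≠ 0) (n : ℕ) :
    (Dq q)^[n] (fun y => f y * g y) x =
      ∑ k ∈ Finset.range (n + 1),
        qBinom q n k * (Dq q)^[n - k] f (q ^ k * x) * (Dq q)^[k] g x := by
  lift q to ℝˣ using hq0.isUnit
  lift x to ℝˣ using hx.isUnit
  have hdiag (u : ℝˣ) : f u * g u = outerMul f g u u := rfl
  rw [Dq_iterate_diagonal hdiag, add_pow_of_mul_eq_smul_mul hq1 (DqFst_mul_dilateDqSnd q)]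
  simp only [LinearMap.sum_apply, Finset.sum_apply, LinearMap.smul_apply, Pi.smul_apply,
    Module.End.mul_apply, DqFst_pow_outerMul, dilateDqSnd_pow_outerMul, outerMul, smul_eq_mul,
    mul_assoc]

/-- The q-Leibniz rule:
`D_q^n (fg)(x) = ∑_{k=0}^n [n k]_q (D_q^{n-k} f)(q^k x) (D_q^k g)(x)`. -/
theorem q_leibniz_rule (q : ℝ) (hq0 : 0 < q) (hq1 : q < 1)
    (f g : ℝ → ℝ) (x : ℝ) (hx : x ≠ 0) (n : ℕ) :
    (Dq q)^[n] (fun y => f y * g y) x =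
      ∑ k ∈ Finset.range (n + 1),
        qBinom q n k * (Dq q)^[n - k] f (q ^ k * x) * (Dq q)^[k] g x :=
  q_leibniz_rule_general hq0.ne' (by rw [abs_of_pos hq0]; exact hq1.ne) f g hx n
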